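/- arXiv:0901.1632 — 12 statements merged into one kernel-verified Lean document; each statement's English description precedes it below -/
import Mathlib

section
/- The motivic May differential squares to zero: for every polynomial p in B, d(d(p)) = 0. -/
open MvPolynomial Finset

/-- The polynomial ring over `ZMod 2` on a variable `τ` (indexed by `none`) and
variables `h_{i,j}` for integers `i ≥ 1`, `j ≥ 0`; the variable `h_{i,j}` is
indexed by `some (i - 1, j)`.  Its cohomology with respect to the May
differential computes the `E₂`-term of the motivic May spectral sequence. -/
abbrev MayB : Type := MvPolynomial (Option (ℕ × ℕ)) (ZMod 2)

/-- The polynomial generator `τ`. -/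
noncomputable def tau : MayB := X none

/-- The polynomial generator `h_{i,j}` (meaningful for `i ≥ 1`, `j ≥ 0`). -/
noncomputable def h (i j : ℕ) : MayB := X (some (i - 1, j))

/-- The motivic May differential squares to zero. -/
theorem motivic_may_differential_sq_zero (d : Derivation (ZMod 2) MayB MayB)
    (htau : d tau = 0)
    (hh : ∀ i j : ℕ, 1 ≤ i →
      d (h i j) = ∑ k ∈ Finset.Icc 1 (i - 1), h k j * h (i - k) (k + j))
    (p : MayB) : d (d p) = 0 := by
  have two : ∀ x : MayB, x + x = 0 := fun x => CharTwo.add_self_eq_zero x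
  -- `d ∘ d` vanishes on the generators `h i j`
  have hgen : ∀ i j : ℕ, 1 ≤ i → d (d (h i j)) = 0 := by
    intro i j hi
    rw [hh i j hi, map_sum]
    have step : ∀ k ∈ Finset.Icc 1 (i - 1), d (h k j * h (i - k) (k + j)) =
        (∑ l ∈ Finset.Icc 1 (i - k - 1),
          h k j * (h l (k + j) * h (i - k - l) (l + (k + j)))) +
        ∑ l ∈ Finset.Icc 1 (k - 1),
          h (i - k) (k + j) * (h l j * h (k - l) (l + j)) := by
      intro k hk
      rw [Finset.mem_Icc] at hk
      rw [Derivation.leibniz, hh k j hk.1, hh (i - k) (k + j) (by omega),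
        smul_eq_mul, smul_eq_mul, Finset.mul_sum, Finset.mul_sum]
    rw [Finset.sum_congr rfl step, Finset.sum_add_distrib]
    have key : (∑ k ∈ Finset.Icc 1 (i - 1), ∑ l ∈ Finset.Icc 1 (i - k - 1),
          h k j * (h l (k + j) * h (i - k - l) (l + (k + j)))) =
        ∑ k ∈ Finset.Icc 1 (i - 1), ∑ l ∈ Finset.Icc 1 (k - 1),
          h (i - k) (k + j) * (h l j * h (k - l) (l + j)) := by
      rw [Finset.sum_sigma', Finset.sum_sigma']
      refine Finset.sum_bij' (fun x _ => ⟨x.1 + x.2, x.1⟩)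
        (fun x _ => ⟨x.2, x.1 - x.2⟩) ?_ ?_ ?_ ?_ ?_
      · rintro ⟨k, l⟩ hx
        simp only [Finset.mem_sigma, Finset.mem_Icc] at hx ⊢
        omega
      · rintro ⟨k, l⟩ hx
        simp only [Finset.mem_sigma, Finset.mem_Icc] at hx ⊢
        omega
      · rintro ⟨k, l⟩ hx
        simp
      · rintro ⟨k, l⟩ hx
        simp only [Finset.mem_sigma, Finset.mem_Icc] at hx
        have e : l + (k - l) = k := by omega
        simp [e]
      · rintro ⟨k, l⟩ hx
        have e1 : i - k - l = i - (k + l) := by omega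
        have e2 : l + (k + j) = k + l + j := by omega
        have e3 : k + l - k = l := by omega
        simp only [e1, e2, e3]
        ring
    rw [key, two]
  induction p using MvPolynomial.induction_on with
  | C a =>
    have e : d (C a) = 0 := d.map_algebraMap a
    rw [e, map_zero]
  | add p q hp hq => rw [map_add, map_add, hp, hq, add_zero]
  | mul_X p n hp =>
    have hX : d (d (X n)) = 0 := by
      rcases n with _ | ⟨i, j⟩
      · have e : d (X none) = 0 := htau
        rw [e, map_zero]
      · exact hgen (i + 1) j (by omega)
    rw [Derivation.leibniz, map_add, smul_eq_mul, smul_eq_mul, Derivation.leibniz,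
      Derivation.leibniz, hX, hp, smul_zero, smul_zero, zero_add, zero_add,
      smul_eq_mul, smul_eq_mul, mul_comm (d p), two]
end

section
/- For every j ≥ 0, the element h_j(1) := h_{2,j}·h_{2,j+1} + h_{1,j+1}·h_{3,j} of B is a cocycle: d(h_{2,j}·h_{2,j+1} + h_{1,j+1}·h_{3,j}) = 0. (For j = 0, 1, 2 these are the classes h₀(1), h₁(1), h₂(1) appearing as generators of the E₂-term of the motivic May spectral sequence.) -/
open MvPolynomial Finset

/-- For every `j ≥ 0`, the element `h_j(1) = h_{2,j} h_{2,j+1} + h_{1,j+1} h_{3,j}`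
is a cocycle for the motivic May differential. -/
theorem motivic_may_hj1_cocycle (d : Derivation (ZMod 2) MayB MayB)
    (htau : d tau = 0)
    (hh : ∀ i j : ℕ, 1 ≤ i →
      d (h i j) = ∑ k ∈ Finset.Icc 1 (i - 1), h k j * h (i - k) (k + j))
    (j : ℕ) :
    d (h 2 j * h 2 (j + 1) + h 1 (j + 1) * h 3 j) = 0 := by
  have e1 : d (h 1 (j + 1)) = 0 := by
    rw [hh _ _ le_rfl]; simp
  have e2 : ∀ m, d (h 2 m) = h 1 m * h 1 (m + 1) := by
    intro m
    rw [hh _ _ (by norm_num)]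
    simp [add_comm]
  have e3 : d (h 3 j) = h 1 j * h 2 (j + 1) + h 2 j * h 1 (j + 2) := by
    rw [hh _ _ (by norm_num)]
    rw [show Finset.Icc 1 (3 - 1) = {1, 2} from rfl, Finset.sum_pair (by norm_num)]
    simp [add_comm]
  have two : (2 : MayB) = 0 := CharTwo.two_eq_zero
  rw [map_add, Derivation.leibniz, Derivation.leibniz, e1, e2, e2, e3]
  simp only [smul_eq_mul, show j + 1 + 1 = j + 2 from rfl]
  linear_combination (h 2 j * h 1 (j + 1) * h 1 (j + 2) + h 2 (j + 1) * h 1 j * h 1 (j + 1)) * two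
end

section
/- For every j ≥ 0, the element h_{1,j+2}·(h_{2,j}·h_{2,j+1} + h_{1,j+1}·h_{3,j}) + h_{1,j}·h_{2,j+1}² of B lies in the image of d. (For j = 0 this is the relation h₂·h₀(1) = h₀·b₂₁, and for j = 1 the relation h₃·h₁(1) = h₁·b₂₂, in the E₂-term of the motivic May spectral sequence.) -/
open MvPolynomial Finset

/-- For every `j ≥ 0`, the element
`h_{1,j+2} (h_{2,j} h_{2,j+1} + h_{1,j+1} h_{3,j}) + h_{1,j} h_{2,j+1}^2`
lies in the image of the motivic May differential. -/
theorem motivic_may_relation_h2_h01 (d : Derivation (ZMod 2) MayB MayB)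
    (htau : d tau = 0)
    (hh : ∀ i j : ℕ, 1 ≤ i →
      d (h i j) = ∑ k ∈ Finset.Icc 1 (i - 1), h k j * h (i - k) (k + j))
    (j : ℕ) :
    ∃ q : MayB, d q =
      h 1 (j + 2) * (h 2 j * h 2 (j + 1) + h 1 (j + 1) * h 3 j)
        + h 1 j * (h 2 (j + 1)) ^ 2 := by
  refine ⟨h 2 (j + 1) * h 3 j, ?_⟩
  have h2 : d (h 2 (j + 1)) = h 1 (j + 1) * h 1 (j + 2) := by
    rw [hh 2 (j + 1) (by norm_num)]
    have e : 1 + (j + 1) = j + 2 := by omega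
    simp [e]
  have h3 : d (h 3 j) = h 1 j * h 2 (j + 1) + h 2 j * h 1 (j + 2) := by
    rw [hh 3 j (by norm_num)]
    have e1 : 1 + j = j + 1 := by omega
    have e2 : 2 + j = j + 2 := by omega
    have e3 : Finset.Icc 1 (3 - 1) = {1, 2} := by decide
    rw [e3, Finset.sum_pair (by norm_num), e1, e2]
  rw [Derivation.leibniz, h2, h3, smul_eq_mul, smul_eq_mul]
  ring
end

section
/- The element h_{2,0}²·h_{2,2}² + h_{1,0}²·h_{3,1}² + h_{1,3}²·h_{3,0}² of B lies in the image of d. (This is the relation b₂₀·b₂₂ = h₀²·b₃₁ + h₃²·b₃₀ in the E₂-term of the motivic May spectral sequence.) -/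
open MvPolynomial Finset

/-- The element `h_{2,0}^2 h_{2,2}^2 + h_{1,0}^2 h_{3,1}^2 + h_{1,3}^2 h_{3,0}^2`
lies in the image of the motivic May differential
(the relation `b20 * b22 = h0^2 * b31 + h3^2 * b30`). -/
theorem motivic_may_relation_b20_b22 (d : Derivation (ZMod 2) MayB MayB)
    (htau : d tau = 0)
    (hh : ∀ i j : ℕ, 1 ≤ i →
      d (h i j) = ∑ k ∈ Finset.Icc 1 (i - 1), h k j * h (i - k) (k + j)) :
    ∃ q : MayB, d q =
      (h 2 0) ^ 2 * (h 2 2) ^ 2 + (h 1 0) ^ 2 * (h 3 1) ^ 2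
        + (h 1 3) ^ 2 * (h 3 0) ^ 2 := by
  have h2 : (2 : MayB) = 0 := CharTwo.two_eq_zero
  have e1 : ∀ j, d (h 1 j) = 0 := fun j => by
    rw [hh 1 j le_rfl]; simp
  have e2 : ∀ j, d (h 2 j) = h 1 j * h 1 (1 + j) := fun j => by
    rw [hh 2 j (by norm_num)]; simp
  have e3 : ∀ j, d (h 3 j) = h 1 j * h 2 (1 + j) + h 2 j * h 1 (2 + j) := fun j => by
    rw [hh 3 j (by norm_num)]
    simp [Finset.sum_Icc_succ_top]
  have e4 : d (h 4 0) = h 1 0 * h 3 1 + h 2 0 * h 2 2 + h 3 0 * h 1 3 := by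
    rw [hh 4 0 (by norm_num)]
    simp [Finset.sum_Icc_succ_top]
  refine ⟨h 4 0 * (h 1 0 * h 3 1 + h 2 0 * h 2 2 + h 3 0 * h 1 3), ?_⟩
  simp only [Derivation.leibniz, map_add, e1, e2, e3, e4, smul_eq_mul, Nat.reduceAdd]
  linear_combination (h 4 0 * (h 1 0 * h 1 1 * h 2 2 + h 1 0 * h 2 1 * h 1 3
      + h 2 0 * h 1 2 * h 1 3)
    + h 1 0 * h 3 1 * h 2 0 * h 2 2 + h 1 0 * h 3 1 * h 3 0 * h 1 3
    + h 2 0 * h 2 2 * h 3 0 * h 1 3) * h2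
end

section
/- The element h_{2,0}²·(h_{2,1}·h_{2,2} + h_{1,2}·h_{3,1}) + h_{1,1}·h_{1,3}·h_{3,0}² of B lies in the image of d. (This is the relation b₂₀·h₁(1) = h₁·h₃·b₃₀ in the E₂-term of the motivic May spectral sequence.) -/
open MvPolynomial Finset

/-- The element
`h_{2,0}^2 (h_{2,1} h_{2,2} + h_{1,2} h_{3,1}) + h_{1,1} h_{1,3} h_{3,0}^2`
lies in the image of the motivic May differential
(the relation `b20 * h1(1) = h1 * h3 * b30`). -/
theorem motivic_may_relation_b20_h11 (d : Derivation (ZMod 2) MayB MayB)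
    (htau : d tau = 0)
    (hh : ∀ i j : ℕ, 1 ≤ i →
      d (h i j) = ∑ k ∈ Finset.Icc 1 (i - 1), h k j * h (i - k) (k + j)) :
    ∃ q : MayB, d q =
      (h 2 0) ^ 2 * (h 2 1 * h 2 2 + h 1 2 * h 3 1)
        + h 1 1 * h 1 3 * (h 3 0) ^ 2 := by
  have d11 : d (h 1 1) = 0 := by rw [hh 1 1 le_rfl]; simp
  have d20 : d (h 2 0) = h 1 0 * h 1 1 := by rw [hh 2 0 (by norm_num)]; simp
  have d21 : d (h 2 1) = h 1 1 * h 1 2 := by rw [hh 2 1 (by norm_num)]; simp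
  have d30 : d (h 3 0) = h 1 0 * h 2 1 + h 2 0 * h 1 2 := by
    rw [hh 3 0 (by norm_num)]; simp [Finset.sum_Icc_succ_top]
  have d31 : d (h 3 1) = h 1 1 * h 2 2 + h 2 1 * h 1 3 := by
    rw [hh 3 1 (by norm_num)]; simp [Finset.sum_Icc_succ_top]
  have d40 : d (h 4 0) = h 1 0 * h 3 1 + h 2 0 * h 2 2 + h 3 0 * h 1 3 := by
    rw [hh 4 0 (by norm_num)]; simp [Finset.sum_Icc_succ_top]
  have two : (2 : MayB) = 0 := CharTwo.two_eq_zero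
  refine ⟨h 1 1 * h 3 0 * h 4 0 + h 2 1 * h 2 0 * h 4 0 + h 3 1 * h 2 0 * h 3 0, ?_⟩
  simp only [map_add, Derivation.leibniz, smul_eq_mul, d11, d20, d21, d30, d31, d40]
  linear_combination (h 1 1 * h 1 0 * h 2 1 * h 4 0 + h 1 1 * h 2 0 * h 1 2 * h 4 0
    + h 1 1 * h 3 0 * h 1 0 * h 3 1 + h 1 1 * h 3 0 * h 2 0 * h 2 2
    + h 2 1 * h 2 0 * h 1 0 * h 3 1 + h 2 1 * h 2 0 * h 3 0 * h 1 3) * two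
end

section
/- The element h_{2,2}²·(h_{2,0}·h_{2,1} + h_{1,1}·h_{3,0}) + h_{1,0}·h_{1,2}·h_{3,1}² of B lies in the image of d. (This is the relation b₂₂·h₀(1) = h₀·h₂·b₃₁ in the E₂-term of the motivic May spectral sequence.) -/
open MvPolynomial Finset

/-- The element
`h_{2,2}^2 (h_{2,0} h_{2,1} + h_{1,1} h_{3,0}) + h_{1,0} h_{1,2} h_{3,1}^2`
lies in the image of the motivic May differential
(the relation `b22 * h0(1) = h0 * h2 * b31`). -/
theorem motivic_may_relation_b22_h01 (d : Derivation (ZMod 2) MayB MayB)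
    (htau : d tau = 0)
    (hh : ∀ i j : ℕ, 1 ≤ i →
      d (h i j) = ∑ k ∈ Finset.Icc 1 (i - 1), h k j * h (i - k) (k + j)) :
    ∃ q : MayB, d q =
      (h 2 2) ^ 2 * (h 2 0 * h 2 1 + h 1 1 * h 3 0)
        + h 1 0 * h 1 2 * (h 3 1) ^ 2 := by
  have h12 : d (h 1 2) = 0 := by
    rw [hh 1 2 le_rfl]; simp
  have h21 : d (h 2 1) = h 1 1 * h 1 2 := by
    rw [hh 2 1 (by norm_num)]; simp
  have h22 : d (h 2 2) = h 1 2 * h 1 3 := by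
    rw [hh 2 2 (by norm_num)]; simp
  have h30 : d (h 3 0) = h 1 0 * h 2 1 + h 2 0 * h 1 2 := by
    rw [hh 3 0 (by norm_num)]; simp [Finset.sum_Icc_succ_top]
  have h31 : d (h 3 1) = h 1 1 * h 2 2 + h 2 1 * h 1 3 := by
    rw [hh 3 1 (by norm_num)]; simp [Finset.sum_Icc_succ_top]
  have h40 : d (h 4 0) = h 1 0 * h 3 1 + h 2 0 * h 2 2 + h 3 0 * h 1 3 := by
    rw [hh 4 0 (by norm_num)]; simp [Finset.sum_Icc_succ_top]
  have two : (2 : MayB) = 0 := CharTwo.two_eq_zero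
  refine ⟨h 3 0 * h 3 1 * h 2 2 + h 4 0 * h 2 1 * h 2 2 + h 4 0 * h 3 1 * h 1 2, ?_⟩
  simp only [map_add, Derivation.leibniz, smul_eq_mul, h12, h21, h22, h30, h31, h40]
  linear_combination (h 1 0 * h 2 1 * h 3 1 * h 2 2 + h 2 0 * h 1 2 * h 3 1 * h 2 2
    + h 3 0 * h 2 1 * h 1 3 * h 2 2 + h 3 0 * h 3 1 * h 1 2 * h 1 3
    + h 4 0 * h 1 1 * h 1 2 * h 2 2 + h 4 0 * h 2 1 * h 1 2 * h 1 3) * two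
end

section
/- The element (h_{2,0}·h_{2,1} + h_{1,1}·h_{3,0})·(h_{2,1}·h_{2,2} + h_{1,2}·h_{3,1}) of B lies in the image of d. (This is the relation h₀(1)·h₁(1) = 0 in the E₂-term of the motivic May spectral sequence.) -/
open MvPolynomial Finset

/-- The element
`(h_{2,0} h_{2,1} + h_{1,1} h_{3,0}) (h_{2,1} h_{2,2} + h_{1,2} h_{3,1})`
lies in the image of the motivic May differential
(the relation `h0(1) * h1(1) = 0`). -/
theorem motivic_may_relation_h01_h11 (d : Derivation (ZMod 2) MayB MayB)
    (htau : d tau = 0)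
    (hh : ∀ i j : ℕ, 1 ≤ i →
      d (h i j) = ∑ k ∈ Finset.Icc 1 (i - 1), h k j * h (i - k) (k + j)) :
    ∃ q : MayB, d q =
      (h 2 0 * h 2 1 + h 1 1 * h 3 0) * (h 2 1 * h 2 2 + h 1 2 * h 3 1) := by
  have two : (2 : MayB) = 0 := CharTwo.two_eq_zero
  have h21 := hh 2 1 (by norm_num)
  have h30 := hh 3 0 (by norm_num)
  have h31 := hh 3 1 (by norm_num)
  have h40 := hh 4 0 (by norm_num)
  simp [Finset.sum_Icc_succ_top] at h21 h30 h31 h40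
  refine ⟨h 4 0 * (h 2 1 * h 2 1) + h 2 1 * (h 3 0 * h 3 1), ?_⟩
  simp only [map_add, Derivation.leibniz, smul_eq_mul, h21, h30, h31, h40]
  linear_combination (h 4 0 * h 2 1 * h 1 1 * h 1 2 + h 2 1 ^ 2 * h 1 0 * h 3 1
    + h 2 1 ^ 2 * h 3 0 * h 1 3) * two
end

section
/- For every n ≥ 1, the monomial h_{1,1}^n is not in the image of d. (Together with the fact that d(h_{1,1}) = 0, this says that the class h₁ is non-nilpotent in the E₂-term of the motivic May spectral sequence, reflecting the paper's observation that h₁ is not nilpotent in Ext over the motivic Steenrod algebra.) -/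
open MvPolynomial Finset

/-- For every `n ≥ 1`, the monomial `h_{1,1}^n` is not a coboundary for the
motivic May differential: the class `h1` is non-nilpotent in the E2-term of
the motivic May spectral sequence. -/
theorem motivic_may_h1_pow_not_coboundary (d : Derivation (ZMod 2) MayB MayB)
    (htau : d tau = 0)
    (hh : ∀ i j : ℕ, 1 ≤ i →
      d (h i j) = ∑ k ∈ Finset.Icc 1 (i - 1), h k j * h (i - k) (k + j))
    (n : ℕ) (hn : 1 ≤ n) :
    ¬ ∃ q : MayB, d q = (h 1 1) ^ n := by
  rintro ⟨q, hq⟩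
  -- Evaluate at the point `h_{1,1} = 1`, all other variables `0`.
  set f : Option (ℕ × ℕ) → ZMod 2 := fun x => if x = some (0, 1) then 1 else 0 with hf
  have key : ∀ p : MayB, eval f (d p) = 0 := by
    intro p
    induction p using MvPolynomial.induction_on with
    | C a =>
      have : d (C a) = 0 := d.map_algebraMap a
      rw [this, map_zero]
    | add p q hp hq => rw [map_add, map_add, hp, hq, add_zero]
    | mul_X p x hp =>
      have hx : eval f (d (X x)) = 0 := by
        rcases x with _ | ⟨i, j⟩
        · have h0 : d (X none) = 0 := htau
          rw [h0, map_zero]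
        · have h1 := hh (i + 1) j (by omega)
          have h2 : h (i + 1) j = X (some (i, j)) := by simp [h]
          rw [h2] at h1
          rw [h1, map_sum]
          refine Finset.sum_eq_zero fun k hk => ?_
          rw [Finset.mem_Icc] at hk
          by_cases hj : j = 1
          · have : k + j ≠ 1 := by omega
            simp [h, hf, this]
          · simp [h, hf, hj]
      rw [Derivation.leibniz, map_add, smul_eq_mul, smul_eq_mul, map_mul, map_mul, hp, hx]
      simp
  have h3 := key q
  rw [hq] at h3
  simp [h, hf] at h3
end

section
/- (Lemma 5.1.) If b(x) is odd and v(t) = v(r) + v(s), then odd(t) = odd(r) + odd(s); that is, the number of n ≥ 1 with t(n) odd equals the number of i ≥ 1 with r(i) odd plus the number of j ≥ 1 with s(j) odd. (Equivalently: in the motivic Milnor-basis product formula, if the multinomial coefficient b(X) is nonzero mod 2 and the May filtration of P^{T(X)} equals the sum of the May filtrations of P^R and P^S, then the exponent u(X) of τ is zero.) -/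
/-- Number of ones in the binary expansion. -/
def popc (n : ℕ) : ℕ := (Nat.bits n).count true

theorem popc_zero : popc 0 = 0 := by simp [popc]

theorem popc_digits (n : ℕ) : popc n = (Nat.digits 2 n).sum := by
  rw [Nat.digits_two_eq_bits, popc]
  induction Nat.bits n with
  | nil => simp
  | cons b l ih => cases b <;> simp [ih, add_comm]

theorem popc_fact (n : ℕ) : padicValNat 2 n.factorial + popc n = n := by
  have h := sub_one_mul_padicValNat_factorial (p := 2) n
  rw [← popc_digits] at h
  have h2 : popc n ≤ n := by rw [popc_digits]; exact Nat.digit_sum_le 2 n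
  omega

theorem popc_rec (n : ℕ) : popc n = n % 2 + popc (n / 2) := by
  rcases Nat.eq_zero_or_pos n with rfl | h
  · simp [popc_zero]
  · rw [popc_digits, popc_digits, Nat.digits_def' (by norm_num) h]; simp

theorem popc_add_le (a b : ℕ) : popc (a + b) ≤ popc a + popc b := by
  have h1 := popc_fact a
  have h2 := popc_fact b
  have h3 := popc_fact (a + b)
  have h := Nat.add_choose_mul_factorial_mul_factorial a b
  have hc : (a + b).choose b ≠ 0 := (Nat.choose_pos (by omega)).ne'
  have h4 := congrArg (padicValNat 2) h
  rw [padicValNat.mul (mul_ne_zero hc a.factorial_ne_zero) b.factorial_ne_zero,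
    padicValNat.mul hc a.factorial_ne_zero] at h4
  omega

theorem popc_add_eq (a b : ℕ) (h : popc (a + b) = popc a + popc b) :
    (a + b) % 2 = a % 2 + b % 2 := by
  by_contra hne
  have ha : a % 2 = 1 := by omega
  have hb : b % 2 = 1 := by omega
  have h1 := popc_rec a
  have h2 := popc_rec b
  have h3 := popc_rec (a + b)
  have e : (a + b) / 2 = a / 2 + b / 2 + 1 := by omega
  rw [e] at h3
  have h4 := popc_add_le (a / 2 + b / 2) 1
  have h5 := popc_add_le (a / 2) (b / 2)
  have h6 : popc 1 = 1 := by simp [popc]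
  omega

theorem popc_sum_le (S : Finset ℕ) (f : ℕ → ℕ) :
    popc (∑ i ∈ S, f i) ≤ ∑ i ∈ S, popc (f i) := by
  induction S using Finset.induction_on with
  | empty => simp [popc_zero]
  | insert a S ha ih =>
    rw [Finset.sum_insert ha, Finset.sum_insert ha]
    have := popc_add_le (f a) (∑ i ∈ S, f i)
    omega

theorem popc_sum_eq (S : Finset ℕ) (f : ℕ → ℕ)
    (h : popc (∑ i ∈ S, f i) = ∑ i ∈ S, popc (f i)) :
    (∑ i ∈ S, f i) % 2 = ∑ i ∈ S, f i % 2 := by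
  induction S using Finset.induction_on with
  | empty => simp
  | insert a S ha ih =>
    rw [Finset.sum_insert ha, Finset.sum_insert ha] at *
    have h1 := popc_add_le (f a) (∑ i ∈ S, f i)
    have h2 := popc_sum_le S f
    rw [popc_add_eq _ _ (by omega), ih (by omega)]

theorem popc_two_pow_mul (j n : ℕ) : popc (2 ^ j * n) = popc n := by
  induction j with
  | zero => simp
  | succ j ih =>
    rw [popc_rec, ← ih]
    have e : 2 ^ (j + 1) * n = 2 * (2 ^ j * n) := by ring
    rw [e]; simp

theorem popc_multinomial (S : Finset ℕ) (f : ℕ → ℕ) (h : Odd (Nat.multinomial S f)) :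
    popc (∑ i ∈ S, f i) = ∑ i ∈ S, popc (f i) := by
  have hp : ∀ T : Finset ℕ, padicValNat 2 (∏ i ∈ T, (f i).factorial) + ∑ i ∈ T, popc (f i)
      = ∑ i ∈ T, f i := by
    intro T
    induction T using Finset.induction_on with
    | empty => simp
    | insert a T ha ih =>
      rw [Finset.sum_insert ha, Finset.sum_insert ha, Finset.prod_insert ha,
        padicValNat.mul (by positivity) (Finset.prod_ne_zero_iff.2 fun i _ => by positivity)]
      have := popc_fact (f a)
      omega
  have h1 := congrArg (padicValNat 2) (Nat.multinomial_spec S f)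
  have h0 : Nat.multinomial S f ≠ 0 := by rintro h'; simp [h'] at h
  rw [padicValNat.mul (Finset.prod_ne_zero_iff.2 fun i _ => by positivity) h0,
    padicValNat.eq_zero_of_not_dvd (n := Nat.multinomial S f)
      (by rw [← even_iff_two_dvd]; simpa using h)] at h1
  have h2 := hp S
  have h3 := popc_fact (∑ i ∈ S, f i)
  omega

theorem extend_sum (N M : ℕ) (h : N ≤ M) (G : ℕ → ℕ) (hG : ∀ i, N ≤ i → G i = 0) :
    ∑ i ∈ Finset.range M, G i = ∑ i ∈ Finset.range N, G i := by
  symm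
  apply Finset.sum_subset
  · intro i; simp; omega
  · intro i _ hi; exact hG i (by simpa using hi)

theorem diag_sum (N : ℕ) (F : ℕ → ℕ → ℕ) (hF : ∀ i j, N ≤ i ∨ N ≤ j → F i j = 0) :
    ∑ n ∈ Finset.range (2 * N + 1), ∑ i ∈ Finset.range (n + 1), F i (n - i)
      = ∑ i ∈ Finset.range N, ∑ j ∈ Finset.range N, F i j := by
  rw [Finset.sum_range_diag_flip, extend_sum N _ (by omega)]
  · apply Finset.sum_congr rfl
    intro i hi
    rw [Finset.mem_range] at hi
    exact extend_sum N _ (by omega) _ fun j hj => hF i j (Or.inr hj)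
  · intro i hi
    exact Finset.sum_eq_zero fun j _ => hF i j (Or.inl hi)

theorem card_odd (K : ℕ) (m : ℕ → ℕ) :
    ((Finset.Icc 1 K).filter fun n => Odd (m n)).card
      = ∑ n ∈ Finset.range K, m (n + 1) % 2 := by
  rw [Finset.card_filter, Finset.range_eq_Ico,
    Finset.sum_Ico_add' (fun n => m n % 2) 0 K 1]
  apply Finset.sum_congr
  · ext n; grind
  · intro n _
    split_ifs with h
    · exact (Nat.odd_iff.1 h).symm
    · rw [Nat.odd_iff] at h; omega


/-- Lemma 5.1 of Dugger–Isaksen, "The motivic Adams spectral sequence".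
Milnor matrix setup: `x : ℕ × ℕ → ℕ` is a matrix with `x (0,0) = 0`, supported
on entries with both coordinates `< N`.  Set `r i = Σ_j 2^j * x (i,j)`,
`s j = Σ_i x (i,j)`, `t n = Σ_{i+j=n} x (i,j)`, and let
`b x = Π_{n ≥ 1} multinomial (x (0,n), x (1,n-1), ..., x (n,0))`.
For a sequence `m` let `v m = Σ_{i ≥ 1} i * (number of ones in the binary
expansion of `m i`)` and let `odd m` be the number of `i ≥ 1` with `m i` odd.
If `b x` is odd and `v t = v r + v s`, then `odd t = odd r + odd s`; that is,
in the motivic Milnor-basis product formula, if `b(X)` is nonzero mod 2 and the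
May filtration of `P^{T(X)}` is the sum of those of `P^R` and `P^S`, then the
exponent `u(X)` of `τ` is zero. -/
theorem milnor_tau_exponent_zero (N : ℕ) (x : ℕ × ℕ → ℕ)
    (hx00 : x (0, 0) = 0)
    (hN : ∀ i j : ℕ, N ≤ i ∨ N ≤ j → x (i, j) = 0)
    (r s t : ℕ → ℕ)
    (hr : ∀ i, r i = ∑ j ∈ Finset.range N, 2 ^ j * x (i, j))
    (hs : ∀ j, s j = ∑ i ∈ Finset.range N, x (i, j))
    (ht : ∀ n, t n = ∑ i ∈ Finset.range (n + 1), x (i, n - i))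
    (hb : Odd (∏ n ∈ Finset.Icc 1 (2 * N),
      Nat.multinomial (Finset.range (n + 1)) fun i => x (i, n - i)))
    (hv : ∑ n ∈ Finset.range (2 * N + 1), n * ((Nat.bits (t n)).count true)
        = (∑ n ∈ Finset.range (2 * N + 1), n * ((Nat.bits (r n)).count true))
          + ∑ n ∈ Finset.range (2 * N + 1), n * ((Nat.bits (s n)).count true)) :
    ((Finset.Icc 1 (2 * N)).filter fun n => Odd (t n)).card
      = ((Finset.Icc 1 (2 * N)).filter fun n => Odd (r n)).card
        + ((Finset.Icc 1 (2 * N)).filter fun n => Odd (s n)).card := by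
  simp only [← popc.eq_1] at hv
  have htn : ∀ n ∈ Finset.range (2 * N + 1),
      popc (t n) = ∑ i ∈ Finset.range (n + 1), popc (x (i, n - i)) := by
    intro n hn
    rw [ht]
    rcases Nat.eq_zero_or_pos n with rfl | hpos
    · simp
    · apply popc_multinomial
      rw [Finset.mem_range] at hn
      exact Odd.of_dvd_nat hb
        (Finset.dvd_prod_of_mem (fun n => Nat.multinomial (Finset.range (n + 1))
          fun i => x (i, n - i)) (Finset.mem_Icc.2 ⟨hpos, by omega⟩))
  have hvt : ∑ n ∈ Finset.range (2 * N + 1), n * popc (t n)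
      = ∑ i ∈ Finset.range N, ∑ j ∈ Finset.range N, (i + j) * popc (x (i, j)) := by
    rw [← diag_sum N (fun i j => (i + j) * popc (x (i, j)))
      (fun i j h => by simp [hN i j h, popc_zero])]
    apply Finset.sum_congr rfl
    intro n hn
    rw [htn n hn, Finset.mul_sum]
    apply Finset.sum_congr rfl
    intro i hi
    rw [Finset.mem_range] at hi
    rw [show i + (n - i) = n by omega]
  have hvr : ∑ n ∈ Finset.range (2 * N + 1), n * popc (r n)
      ≤ ∑ i ∈ Finset.range N, ∑ j ∈ Finset.range N, i * popc (x (i, j)) := by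
    rw [extend_sum N _ (by omega)]
    · apply Finset.sum_le_sum
      intro i _
      rw [← Finset.mul_sum, hr]
      apply Nat.mul_le_mul_left
      refine (popc_sum_le _ _).trans_eq ?_
      exact Finset.sum_congr rfl fun j _ => popc_two_pow_mul _ _
    · intro i hi
      rw [hr, Finset.sum_eq_zero fun j _ => by rw [hN i j (Or.inl hi), mul_zero]]
      simp [popc_zero]
  have hsle : ∀ j ∈ Finset.range (2 * N + 1),
      j * popc (s j) ≤ j * ∑ i ∈ Finset.range N, popc (x (i, j)) := by
    intro j _
    rw [hs]
    exact Nat.mul_le_mul_left _ (popc_sum_le _ _)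
  have hvs' : ∑ j ∈ Finset.range (2 * N + 1), j * ∑ i ∈ Finset.range N, popc (x (i, j))
      = ∑ i ∈ Finset.range N, ∑ j ∈ Finset.range N, j * popc (x (i, j)) := by
    rw [extend_sum N _ (by omega), Finset.sum_comm]
    · simp only [Finset.mul_sum]
    · intro j hj
      rw [Finset.sum_eq_zero fun i _ => by rw [hN i j (Or.inr hj), popc_zero], mul_zero]
  have hsum := Finset.sum_le_sum hsle
  simp only [add_mul, Finset.sum_add_distrib] at hvt
  have hseq := (Finset.sum_eq_sum_iff_of_le hsle).1 (by omega)
  have hsodd : ∀ j ∈ Finset.range (2 * N),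
      s (j + 1) % 2 = ∑ i ∈ Finset.range N, x (i, j + 1) % 2 := by
    intro j hj
    rw [Finset.mem_range] at hj
    have h := Nat.eq_of_mul_eq_mul_left (Nat.succ_pos j)
      (hseq (j + 1) (Finset.mem_range.2 (by omega)))
    rw [hs] at h ⊢
    exact popc_sum_eq _ _ h
  have hrodd : ∀ i, r i % 2 = x (i, 0) % 2 := by
    intro i
    rw [hr]
    cases N with
    | zero => simp [hN i 0 (Or.inl (Nat.zero_le _))]
    | succ N =>
      rw [Finset.sum_range_succ']
      have : 2 ∣ ∑ k ∈ Finset.range N, 2 ^ (k + 1) * x (i, k + 1) :=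
        Finset.dvd_sum fun k _ => ⟨2 ^ k * x (i, k + 1), by ring⟩
      simp only [pow_zero, one_mul]
      omega
  have htodd : ∀ n ∈ Finset.range (2 * N + 1),
      t n % 2 = ∑ i ∈ Finset.range (n + 1), x (i, n - i) % 2 := by
    intro n hn
    have h := htn n hn
    rw [ht] at h ⊢
    exact popc_sum_eq _ _ h
  have ht0 : t 0 = 0 := by rw [ht]; simp [hx00]
  have hr0 : r 0 % 2 = 0 := by rw [hrodd, hx00]
  have hT : ∑ n ∈ Finset.range (2 * N), t (n + 1) % 2
      = ∑ i ∈ Finset.range N, ∑ j ∈ Finset.range N, x (i, j) % 2 := by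
    rw [← diag_sum N (fun i j => x (i, j) % 2) (fun i j h => by simp [hN i j h]),
      ← Finset.sum_congr rfl htodd, Finset.sum_range_succ' _ (2 * N), ht0, Nat.zero_mod, add_zero]
  have hR : ∑ n ∈ Finset.range (2 * N), r (n + 1) % 2
      = ∑ i ∈ Finset.range N, x (i, 0) % 2 := by
    rw [← extend_sum N (2 * N + 1) (by omega) (fun i => x (i, 0) % 2)
      (fun i h => by simp [hN i 0 (Or.inl h)]), Finset.sum_range_succ' _ (2 * N), hx00, Nat.zero_mod, add_zero]
    simp only [hrodd]
  rw [card_odd, card_odd, card_odd, hT, hR, Finset.sum_congr rfl hsodd, Finset.sum_comm,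
    ← extend_sum N (2 * N + 1) (by omega) (fun j => ∑ i ∈ Finset.range N, x (i, j) % 2)
      (fun j h => Finset.sum_eq_zero fun i _ => by simp [hN i j (Or.inr h)]),
    Finset.sum_range_succ' _ (2 * N), add_comm]
end

section
/- If b(x) is odd, then odd(t) ≥ odd(r) + odd(s); that is, the number of n ≥ 1 with t(n) odd is at least the number of i ≥ 1 with r(i) odd plus the number of j ≥ 1 with s(j) odd. (Equivalently: the exponent u(X) of τ appearing in each nonzero term of the motivic Milnor-basis product formula is a non-negative integer.) -/
theorem choose_even_aux (n k : ℕ) (hn : Even n) (hk : Odd k) : Even (n.choose k) := by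
  obtain ⟨k, rfl⟩ : ∃ l, k = l + 1 := ⟨k - 1, by have := hk.pos; omega⟩
  rcases n with _ | n
  · simp
  · have h := Nat.add_one_mul_choose_eq n k
    have h1 : Even ((n + 1).choose (k + 1) * (k + 1)) := by
      rw [← h]
      exact hn.mul_right _
    rcases Nat.even_mul.1 h1 with h2 | h2
    · exact h2
    · exact absurd hk (Nat.not_odd_iff_even.2 h2)

theorem odd_sum_aux (s : Finset ℕ) (f : ℕ → ℕ) (b : ℕ) (hb : b ∈ s) (hf : Odd (f b))
    (hu : ∀ a ∈ s, Odd (f a) → a = b) : Odd (∑ i ∈ s, f i) := by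
  rw [← Finset.add_sum_erase s f hb]
  refine hf.add_even ?_
  refine Finset.even_sum _ fun i hi => ?_
  rw [Finset.mem_erase] at hi
  by_contra h
  exact hi.1 (hu i hi.2 (Nat.not_even_iff_odd.1 h))

theorem multinomial_aux (s : Finset ℕ) (f : ℕ → ℕ) (h : Odd (Nat.multinomial s f)) :
    ∀ a ∈ s, ∀ b ∈ s, Odd (f a) → Odd (f b) → a = b := by
  induction s using Finset.induction_on with
  | empty => simp
  | insert c s hc ih =>
    rw [Nat.multinomial_insert hc, Nat.odd_mul] at h
    have ih := ih h.2
    have key : ∀ b ∈ s, Odd (f c) → Odd (f b) → False := by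
      intro b hb h1 h2
      have h3 := odd_sum_aux s f b hb h2 (fun a ha hfa => ih a ha b hb hfa h2)
      exact Nat.not_odd_iff_even.2 (choose_even_aux _ _ (h1.add_odd h3) h1) h.1
    intro a ha b hb h1 h2
    rcases Finset.mem_insert.1 ha with ha | ha <;> rcases Finset.mem_insert.1 hb with hb | hb
    · rw [ha, hb]
    · exact (key b hb (ha ▸ h1) h2).elim
    · exact (key a ha (hb ▸ h2) h1).elim
    · exact ih a ha b hb h1 h2

/-- Milnor matrix setup: `x : ℕ × ℕ → ℕ` is a matrix with `x (0,0) = 0`,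
supported on entries with both coordinates `< N`.  Set
`r i = Σ_j 2^j * x (i,j)`, `s j = Σ_i x (i,j)`, `t n = Σ_{i+j=n} x (i,j)`, and
`b x = Π_{n ≥ 1} multinomial (x (0,n), x (1,n-1), ..., x (n,0))`.
If `b x` is odd then the number of `n ≥ 1` with `t n` odd is at least the
number of `i ≥ 1` with `r i` odd plus the number of `j ≥ 1` with `s j` odd;
that is, the exponent `u(X)` of `τ` appearing in each nonzero term of the
motivic Milnor-basis product formula is a non-negative integer. -/
theorem milnor_tau_exponent_nonneg (N : ℕ) (x : ℕ × ℕ → ℕ)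
    (hx00 : x (0, 0) = 0)
    (hN : ∀ i j : ℕ, N ≤ i ∨ N ≤ j → x (i, j) = 0)
    (r s t : ℕ → ℕ)
    (hr : ∀ i, r i = ∑ j ∈ Finset.range N, 2 ^ j * x (i, j))
    (hs : ∀ j, s j = ∑ i ∈ Finset.range N, x (i, j))
    (ht : ∀ n, t n = ∑ i ∈ Finset.range (n + 1), x (i, n - i))
    (hb : Odd (∏ n ∈ Finset.Icc 1 (2 * N),
      Nat.multinomial (Finset.range (n + 1)) fun i => x (i, n - i))) :
    ((Finset.Icc 1 (2 * N)).filter fun n => Odd (r n)).card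
      + ((Finset.Icc 1 (2 * N)).filter fun n => Odd (s n)).card
      ≤ ((Finset.Icc 1 (2 * N)).filter fun n => Odd (t n)).card := by
  have lt : ∀ i j, Odd (x (i, j)) → i < N ∧ j < N := by
    intro i j h
    by_contra hc
    rw [hN i j (by omega)] at h
    simp at h
  have U : ∀ i j i' j', i + j = i' + j' → 1 ≤ i + j → Odd (x (i, j)) → Odd (x (i', j')) →
      i = i' := by
    intro i j i' j' he h1 ho ho'
    have hl := lt _ _ ho
    have hm : Odd (Nat.multinomial (Finset.range (i + j + 1)) fun k => x (k, i + j - k)) :=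
      Odd.of_dvd_nat hb (Finset.dvd_prod_of_mem (fun n =>
        Nat.multinomial (Finset.range (n + 1)) fun i => x (i, n - i))
        (Finset.mem_Icc.2 ⟨h1, by omega⟩))
    refine multinomial_aux _ _ hm i (Finset.mem_range.2 (by omega)) i' (Finset.mem_range.2 (by omega)) ?_ ?_
    · simpa using ho
    · have : i + j - i' = j' := by omega
      simpa [this] using ho'
  have T : ∀ i j, 1 ≤ i + j → Odd (x (i, j)) →
      i + j ∈ (Finset.Icc 1 (2 * N)).filter fun n => Odd (t n) := by
    intro i j h1 ho
    have hl := lt _ _ ho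
    refine Finset.mem_filter.2 ⟨Finset.mem_Icc.2 ⟨h1, by omega⟩, ?_⟩
    rw [ht]
    refine odd_sum_aux _ _ i (Finset.mem_range.2 (by omega)) (by simpa using ho) ?_
    intro a ha hoa
    have ha := Finset.mem_range.1 ha
    exact U a (i + j - a) i j (by omega) (by omega) hoa ho
  have R : ∀ i, Odd (r i) → Odd (x (i, 0)) := by
    intro i h
    by_contra hc
    rw [hr] at h
    refine Nat.not_odd_iff_even.2 (Finset.even_sum _ fun j _ => ?_) h
    rcases j with _ | j
    · simpa using hc
    · exact Even.mul_right (by simp [Nat.even_pow]) _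
  have S : ∀ j, ∃ i, Odd (s j) → Odd (x (i, j)) := by
    intro j
    by_contra hc
    push Not at hc
    have h := (hc 0).1
    rw [hs] at h
    exact Nat.not_odd_iff_even.2
      (Finset.even_sum _ fun i _ => by simpa using (hc i).2) h
  choose g hg using S
  have inj : Set.InjOn (fun j => g j + j)
      ((Finset.Icc 1 (2 * N)).filter fun n => Odd (s n) : Finset ℕ) := by
    intro j hj j' hj' he
    simp only [Finset.coe_filter, Finset.mem_Icc, Set.mem_ofPred_eq] at hj hj' he
    have := U _ _ _ _ he (by omega) (hg j hj.2) (hg j' hj'.2)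
    omega
  rw [← Finset.card_image_of_injOn inj, ← Finset.card_union_of_disjoint]
  · refine Finset.card_le_card (Finset.union_subset ?_ ?_)
    · intro i hi
      rw [Finset.mem_filter, Finset.mem_Icc] at hi
      exact T i 0 (by omega) (R i hi.2)
    · intro n hn
      obtain ⟨j, hj, rfl⟩ := Finset.mem_image.1 hn
      rw [Finset.mem_filter, Finset.mem_Icc] at hj
      exact T _ _ (by omega) (hg j hj.2)
  · rw [Finset.disjoint_left]
    intro i hi hn
    obtain ⟨j, hj, he⟩ := Finset.mem_image.1 hn
    rw [Finset.mem_filter, Finset.mem_Icc] at hi hj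
    have := U (g j) j i 0 he (by omega) (hg j hj.2) (R i hi.2)
    omega
end

section
/- Let a, b, c be natural numbers with a < 2b and 2c ≤ a. If the binomial coefficient choose(b − 1 − c, a − 2c) is odd, then ⌊a/2⌋ + ⌊b/2⌋ = ⌊(a + b − c)/2⌋ + ⌊c/2⌋ + ε, where ε = 1 if a and b are both even and c is odd, and ε = 0 otherwise. (This says that in the motivic Adem relation Sq^a Sq^b = Σ_c choose(b−1−c, a−2c)·τ^?·Sq^{a+b−c} Sq^c, the exponent of τ required to make the relation homogeneous in the motivic weight is 1 exactly when a and b are even and c is odd, and 0 otherwise.) -/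
/-- An odd binomial coefficient with odd lower index has odd upper index. -/
theorem odd_upper_of_odd_choose (n k : ℕ) (h : Odd (Nat.choose n k)) (hk : k % 2 = 1) :
    n % 2 = 1 := by
  haveI : Fact (Nat.Prime 2) := ⟨Nat.prime_two⟩
  by_contra hn
  have hn0 : n % 2 = 0 := by omega
  have := Choose.choose_modEq_choose_mod_mul_choose_div_nat (n := n) (k := k) (p := 2)
  rw [hn0, hk] at this
  simp only [Nat.choose_zero_succ, zero_mul, Nat.ModEq] at this
  rw [Nat.odd_iff] at h
  omega

/-- In the motivic Adem relation
`Sq^a Sq^b = Σ_c choose (b-1-c) (a-2c) * τ^? * Sq^(a+b-c) Sq^c` (for `a < 2b`),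
the exponent of `τ` needed to make the relation homogeneous in the motivic
weight (the weight of `Sq^n` being `⌊n/2⌋`) is `1` exactly when `a` and `b`
are even and `c` is odd, and `0` otherwise: whenever the binomial coefficient
`choose (b-1-c) (a-2c)` is odd, one has
`⌊a/2⌋ + ⌊b/2⌋ = ⌊(a+b-c)/2⌋ + ⌊c/2⌋ + ε` with `ε` as described. -/
theorem motivic_adem_tau_exponent (a b c : ℕ) (hab : a < 2 * b) (hca : 2 * c ≤ a)
    (hodd : Odd (Nat.choose (b - 1 - c) (a - 2 * c))) :
    a / 2 + b / 2
      = (a + b - c) / 2 + c / 2 + (if Even a ∧ Even b ∧ Odd c then 1 else 0) := by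
  have key := odd_upper_of_odd_choose _ _ hodd
  simp only [Nat.even_iff, Nat.odd_iff]
  split_ifs <;> omega
end

section
/- Let S ⊆ ℤ × ℤ be a set of bidegrees such that (i) the first coordinates of elements of S are bounded below, and (ii) for each (a,b) ∈ S there are only finitely many (c,d) ∈ S with c = a and d ≤ b. Then S is motivically finite type. -/
/-- A set of bidegrees `(p, q) ∈ ℤ × ℤ` (with Chow weight `2q - p`) is
motivically finite type if, for every `(a, b)` in it, only finitely many of
its members `(c, d)` satisfy `c ≤ a` and `2d - c ≤ 2b - a`. -/
def MotivicallyFiniteType (S : Set (ℤ × ℤ)) : Prop :=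
  ∀ p ∈ S, {q : ℤ × ℤ | q ∈ S ∧ q.1 ≤ p.1 ∧ 2 * q.2 - q.1 ≤ 2 * p.2 - p.1}.Finite

/-- If the first coordinates of the members of a set `S` of bidegrees are
bounded below, and for each `(a, b) ∈ S` only finitely many `(c, d) ∈ S`
satisfy `c = a` and `d ≤ b`, then `S` is motivically finite type. -/
theorem motivicallyFiniteType_of_bddBelow_of_col_finite (S : Set (ℤ × ℤ))
    (h1 : ∃ B : ℤ, ∀ q ∈ S, B ≤ q.1)
    (h2 : ∀ p ∈ S, {q : ℤ × ℤ | q ∈ S ∧ q.1 = p.1 ∧ q.2 ≤ p.2}.Finite) :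
    MotivicallyFiniteType S := by
  obtain ⟨B, hB⟩ := h1
  intro p hp
  have col : ∀ c : ℤ, {q : ℤ × ℤ | q ∈ S ∧ q.1 = c ∧ q.2 ≤ p.2}.Finite := by
    intro c
    rcases Set.eq_empty_or_nonempty {q : ℤ × ℤ | q ∈ S ∧ q.1 = c ∧ q.2 ≤ p.2} with h | ⟨r, hr⟩
    · rw [h]
      exact Set.finite_empty
    · obtain ⟨hrS, hrc, hrp⟩ := hr
      refine ((h2 r hrS).union
        ((Set.finite_Icc c c).prod (Set.finite_Icc r.2 p.2))).subset ?_
      rintro q ⟨hqS, hqc, hqp⟩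
      rcases le_total q.2 r.2 with h | h
      · exact Or.inl ⟨hqS, hqc.trans hrc.symm, h⟩
      · exact Or.inr ⟨⟨hqc.ge, hqc.le⟩, ⟨h, hqp⟩⟩
  refine ((Set.finite_Icc B p.1).biUnion (fun c _ => col c)).subset ?_
  rintro q ⟨hqS, hq1, hq2⟩
  refine Set.mem_biUnion (show q.1 ∈ Set.Icc B p.1 from ⟨hB q hqS, hq1⟩) ?_
  exact ⟨hqS, rfl, by omega⟩
end
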